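/- For the two-sided queue Markov chain {z(k)} on ℤ with evolution z(k+1) = z(k) + a^c(z(k),k) - a^s(z(k),k), assume: arrivals are bounded by A_max a.s.; E[a^c(z,k) - a^s(z,k)] = ε(φ^c(z/τ) - φ^s(z/τ)) with |φ^c|, |φ^s| ≤ φ_max; and the negative drift condition holds with constants δ, K > 0. Then the chain is positive recurrent and the steady-state imbalance z̄ satisfies E[|z̄|] ≤ (2A_max² + ετK(2φ_max + δ)) / (εδ). -/

import Mathlib

open MeasureTheory

open Filter Topology ENNReal in
/-- Krylov-Bogoliubov / Foster-Lyapunov on the integers. -/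
theorem exists_stationary_aux (f : ℤ → Measure ℤ) (hf : ∀ z, IsProbabilityMeasure (f z))
    (V L : ℤ → ℝ≥0∞) (hV0 : V 0 = 0) (a C : ℝ≥0∞) (ha0 : a ≠ 0) (ha : a ≠ ∞) (hC : C ≠ ∞)
    (hL : ∀ z, L z ≠ ∞) (hLfin : ∀ N : ℕ, {z | L z < N}.Finite)
    (hdrift : ∀ z, ∫⁻ w, V w ∂(f z) + a * L z ≤ V z + a * C) :
    ∃ π : Measure ℤ, IsProbabilityMeasure π ∧ π.bind f = π ∧ ∫⁻ z, L z ∂π ≤ C := by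
  have hfm : Measurable f := measurable_of_countable f
  let μ : ℕ → Measure ℤ := fun n => Nat.rec (Measure.dirac 0) (fun _ m => m.bind f) n
  have hμ0 : μ 0 = Measure.dirac 0 := rfl
  have hμs : ∀ n, μ (n + 1) = (μ n).bind f := fun n => rfl
  have hbind : ∀ (m : Measure ℤ) (g : ℤ → ℝ≥0∞),
      ∫⁻ z, g z ∂(m.bind f) = ∫⁻ z, ∫⁻ w, g w ∂(f z) ∂m := fun m g =>
    Measure.lintegral_bind hfm.aemeasurable (measurable_of_countable g).aemeasurable
  have hμ1 : ∀ n, μ n Set.univ = 1 := by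
    intro n
    induction n with
    | zero => rw [hμ0]; simp
    | succ n ih =>
      rw [hμs, Measure.bind_apply MeasurableSet.univ hfm.aemeasurable]
      simp [ih]
  have hsum : ∀ n : ℕ, ∫⁻ z, V z ∂(μ n) + a * ∑ k ∈ Finset.range n, ∫⁻ z, L z ∂(μ k)
      ≤ n * (a * C) := by
    intro n
    induction n with
    | zero => simp [hμ0, hV0]
    | succ n ih =>
      have h1 : ∫⁻ z, V z ∂(μ (n+1)) + a * ∫⁻ z, L z ∂(μ n) ≤ ∫⁻ z, V z ∂(μ n) + a * C := by
        rw [hμs, hbind, ← lintegral_const_mul _ (measurable_of_countable L),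
          ← lintegral_add_left (measurable_of_countable _)]
        refine (lintegral_mono hdrift).trans ?_
        rw [lintegral_add_left (measurable_of_countable _), lintegral_const, hμ1, mul_one]
      rw [Finset.sum_range_succ, mul_add]
      calc _ = (∫⁻ z, V z ∂(μ (n+1)) + a * ∫⁻ z, L z ∂(μ n))
                + a * ∑ k ∈ Finset.range n, ∫⁻ z, L z ∂(μ k) := by ring
        _ ≤ (∫⁻ z, V z ∂(μ n) + a * C) + a * ∑ k ∈ Finset.range n, ∫⁻ z, L z ∂(μ k) := by gcongr
        _ = (∫⁻ z, V z ∂(μ n) + a * ∑ k ∈ Finset.range n, ∫⁻ z, L z ∂(μ k)) + a * C := by ring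
        _ ≤ n * (a * C) + a * C := by gcongr
        _ = _ := by push_cast; ring
  let c : ℕ → ℝ≥0∞ := fun n => ((n + 1 : ℕ) : ℝ≥0∞)⁻¹
  have hc : ∀ n, c n * ((n + 1 : ℕ) : ℝ≥0∞) = 1 := fun n =>
    ENNReal.inv_mul_cancel (by simp) (ENNReal.natCast_ne_top _)
  let m : ℕ → Measure ℤ := fun n => c n • ∑ k ∈ Finset.range (n + 1), μ k
  have hmint : ∀ n (g : ℤ → ℝ≥0∞),
      ∫⁻ z, g z ∂(m n) = c n * ∑ k ∈ Finset.range (n+1), ∫⁻ z, g z ∂(μ k) := by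
    intro n g
    simp only [m]
    rw [lintegral_smul_measure, lintegral_finsetSum_measure, smul_eq_mul]
  have hmL : ∀ n, ∫⁻ z, L z ∂(m n) ≤ C := by
    intro n
    rw [hmint]
    have h := (le_add_self).trans (hsum (n+1))
    have h2 : ∑ k ∈ Finset.range (n+1), ∫⁻ z, L z ∂(μ k) ≤ ((n+1 : ℕ) : ℝ≥0∞) * C := by
      rw [mul_left_comm] at h
      exact (ENNReal.mul_le_mul_iff_right ha0 ha).1 h
    calc _ ≤ c n * (((n+1 : ℕ) : ℝ≥0∞) * C) := by gcongr
      _ = C := by rw [← mul_assoc, hc, one_mul]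
  have hm1 : ∀ n, m n Set.univ = 1 := by
    intro n
    have := hmint n 1
    simp only [Pi.one_apply, lintegral_one, hμ1] at this
    rw [this]
    simpa using hc n
  have hmf : ∀ n z, ∫⁻ w, f w {z} ∂(m n) ≤ m n {z} + c n := by
    intro n z
    have e1 : ∀ k, ∫⁻ w, f w {z} ∂(μ k) = μ (k+1) {z} := fun k => by
      rw [hμs, Measure.bind_apply (measurableSet_singleton z) hfm.aemeasurable]
    have e2 : m n {z} = c n * ∑ k ∈ Finset.range (n+1), μ k {z} := by
      simp [m]
    rw [hmint, e2]
    simp only [e1]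
    calc _ ≤ c n * (∑ k ∈ Finset.range (n+1), μ k {z} + 1) := by
          gcongr
          calc _ ≤ ∑ k ∈ Finset.range (n+1+1), μ k {z} := by
                rw [Finset.sum_range_succ' _ (n+1)]; exact le_self_add
            _ ≤ _ := by
                rw [Finset.sum_range_succ _ (n+1)]
                gcongr
                rw [← hμ1 (n+1)]; exact measure_mono (Set.subset_univ _)
      _ = _ := by rw [mul_add, mul_one]
  let U : Ultrafilter ℕ := Filter.hyperfilter ℕ
  have hU : (U : Filter ℕ) ≤ atTop := Nat.hyperfilter_le_atTop
  have hlim : ∀ z, ∃ q : ℝ≥0∞, Tendsto (fun n => m n {z}) U (𝓝 q) := fun z =>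
    ⟨_, (U.map (fun n => m n {z})).le_nhds_lim⟩
  choose p hp using hlim
  let π : Measure ℤ := Measure.sum (fun z => p z • Measure.dirac z)
  have hπint : ∀ g : ℤ → ℝ≥0∞, ∫⁻ z, g z ∂π = ∑' z, p z * g z := by
    intro g
    simp [π, lintegral_sum_measure, lintegral_smul_measure]
  have hfin : ∀ (g : ℤ → ℝ≥0∞), (∀ z, g z ≠ ∞) → ∀ s : Finset ℤ,
      Tendsto (fun n => ∑ z ∈ s, m n {z} * g z) U (𝓝 (∑ z ∈ s, p z * g z)) := by
    intro g hg s
    exact tendsto_finsetSum _ fun z _ => ENNReal.Tendsto.mul_const (hp z) (Or.inr (hg z))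
  have hmtsum : ∀ n (g : ℤ → ℝ≥0∞), ∫⁻ z, g z ∂(m n) = ∑' z, m n {z} * g z := by
    intro n g
    rw [lintegral_countable']
    simp [mul_comm]
  have hfatou : ∀ (g : ℤ → ℝ≥0∞), (∀ z, g z ≠ ∞) → ∀ (b : ℕ → ℝ≥0∞) (B : ℝ≥0∞),
      Tendsto b U (𝓝 B) → (∀ n, ∫⁻ z, g z ∂(m n) ≤ b n) → ∫⁻ z, g z ∂π ≤ B := by
    intro g hg b B hb hle
    rw [hπint, ENNReal.tsum_eq_iSup_sum]
    refine iSup_le fun s => ?_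
    refine le_of_tendsto_of_tendsto' (hfin g hg s) hb fun n => ?_
    refine le_trans ?_ (hle n)
    rw [hmtsum]
    exact ENNReal.sum_le_tsum s
  have hπle : π Set.univ ≤ 1 := by
    have := hfatou (fun _ => 1) (by simp) (fun _ => 1) 1 tendsto_const_nhds (by simp [hm1])
    simpa using this
  have hπL : ∫⁻ z, L z ∂π ≤ C := hfatou L hL (fun _ => C) C tendsto_const_nhds hmL
  have hN : ∀ N : ℕ, (N : ℝ≥0∞) ≤ N * π Set.univ + C := by
    intro N
    let s := (hLfin N).toFinset
    have h1 : ∀ n, (N : ℝ≥0∞) ≤ (∑ z ∈ s, m n {z} * N) + C := by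
      intro n
      have hs : ∑ z ∈ s, m n {z} * N = ∫⁻ z, (s : Set ℤ).indicator (fun _ => (N : ℝ≥0∞)) z ∂(m n) := by
        rw [lintegral_indicator (Finset.measurableSet s), lintegral_const, Measure.restrict_apply_univ,
          ← Finset.sum_mul, sum_measure_singleton, mul_comm]
      rw [hs]
      calc (N : ℝ≥0∞) = ∫⁻ z, (N : ℝ≥0∞) ∂(m n) := by rw [lintegral_const, hm1, mul_one]
        _ ≤ ∫⁻ z, ((s : Set ℤ).indicator (fun _ => (N : ℝ≥0∞)) z + L z) ∂(m n) := by
          refine lintegral_mono fun z => ?_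
          by_cases hz : L z < N
          · have : z ∈ (s : Set ℤ) := by simpa [s] using hz
            simp only [Set.indicator_of_mem this]
            exact le_self_add
          · exact (not_lt.1 hz).trans le_add_self
        _ = _ := lintegral_add_left (measurable_of_countable _) _
        _ ≤ _ := by gcongr; exact hmL n
    have h2 : (N : ℝ≥0∞) ≤ (∑ z ∈ s, p z * N) + C :=
      ge_of_tendsto' ((hfin (fun _ => N) (by simp) s).add tendsto_const_nhds) h1
    refine h2.trans ?_
    gcongr
    have := hπint (fun _ => (N : ℝ≥0∞))
    rw [lintegral_const] at this
    rw [this]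
    exact ENNReal.sum_le_tsum s
  have hπ1 : π Set.univ = 1 := by
    refine le_antisymm hπle ?_
    by_contra hlt
    rw [not_le] at hlt
    have hpos : 1 - π Set.univ ≠ 0 := (tsub_pos_of_lt hlt).ne'
    have hfinπ : π Set.univ ≠ ∞ := (hlt.trans ENNReal.one_lt_top).ne
    obtain ⟨N, hN'⟩ := ENNReal.exists_nat_mul_gt hpos hC
    have h3 : (N : ℝ≥0∞) * (1 - π Set.univ) ≤ C := by
      rw [ENNReal.mul_sub (by simp), mul_one]
      exact tsub_le_iff_left.2 (hN N)
    exact absurd h3 (not_le.2 hN')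
  have hπP : IsProbabilityMeasure π := ⟨hπ1⟩
  have hπs : ∀ z, π {z} = p z := by
    intro z
    have := hπint (({z} : Set ℤ).indicator 1)
    rw [lintegral_indicator_one (measurableSet_singleton z)] at this
    rw [this, tsum_eq_single z]
    · simp
    · intro b hb; simp [hb]
  have hc0 : Tendsto c U (𝓝 0) := by
    refine Tendsto.mono_left ?_ hU
    exact (tendsto_add_atTop_iff_nat 1).2 ENNReal.tendsto_inv_nat_nhds_zero
  have hst : ∀ z, (π.bind f) {z} ≤ π {z} := by
    intro z
    rw [Measure.bind_apply (measurableSet_singleton z) hfm.aemeasurable, hπs]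
    refine hfatou (fun w => f w {z}) (fun w => measure_ne_top _ _) _ _ ?_ (fun n => hmf n z)
    simpa using (hp z).add hc0
  have hle : π.bind f ≤ π := by
    refine Measure.le_iff.2 fun s _ => ?_
    rw [← Measure.tsum_indicator_apply_singleton _ s (MeasurableSet.of_discrete),
      ← Measure.tsum_indicator_apply_singleton _ s (MeasurableSet.of_discrete)]
    refine ENNReal.tsum_le_tsum fun z => ?_
    exact Set.indicator_le_indicator (hst z)
  have hb1 : (π.bind f) Set.univ = 1 := by
    rw [Measure.bind_apply MeasurableSet.univ hfm.aemeasurable]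
    simp
  refine ⟨π, hπP, ?_, hπL⟩
  have : IsFiniteMeasure (π.bind f) := ⟨by rw [hb1]; exact ENNReal.one_lt_top⟩
  exact Measure.eq_of_le_of_measure_univ_eq hle (by rw [hb1, hπ1])

/-- Positive recurrence of the two-sided queue under the negative drift condition:
there exists a stationary probability distribution π for the imbalance chain
z ↦ z + a^c - a^s, and it satisfies the moment bound
E[|z̄|] ≤ (2A_max² + ετK(2φ_max + δ))/(εδ). -/
theorem stmt13 (ν : ℤ → Measure (ℤ × ℤ)) (hν : ∀ z, IsProbabilityMeasure (ν z))
    (Amax ε τ φmax δ K : ℝ) (φc φs : ℝ → ℝ)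
    (hε : 0 < ε) (hτ : 0 < τ) (hδ : 0 < δ) (hK : 0 < K) (hA : 0 < Amax)
    -- arrivals bounded by A_max almost surely
    (hb : ∀ z, ∀ᵐ p ∂(ν z), |(p.1 : ℝ)| ≤ Amax ∧ |(p.2 : ℝ)| ≤ Amax)
    -- mean drift: E[a^c - a^s | state z] = ε(φ^c(z/τ) - φ^s(z/τ))
    (hmean : ∀ z : ℤ, ∫ p, ((p.1 : ℝ) - (p.2 : ℝ)) ∂(ν z)
      = ε * (φc ((z : ℝ) / τ) - φs ((z : ℝ) / τ)))
    (hφc : ∀ x, |φc x| ≤ φmax) (hφs : ∀ x, |φs x| ≤ φmax)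
    -- negative drift condition
    (hd1 : ∀ x > K, φc x - φs x < -δ) (hd2 : ∀ x < -K, δ < φc x - φs x) :
    ∃ π : Measure ℤ, IsProbabilityMeasure π ∧
      π.bind (fun z => (ν z).map (fun p => z + p.1 - p.2)) = π ∧
      ∫ z, |(z : ℝ)| ∂π ≤ (2 * Amax ^ 2 + ε * τ * K * (2 * φmax + δ)) / (ε * δ) := by
  set C : ℝ := (2 * Amax ^ 2 + ε * τ * K * (2 * φmax + δ)) / (ε * δ) with hCdef
  have hφ0 : 0 ≤ φmax := (abs_nonneg _).trans (hφc 0)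
  have hC0 : 0 ≤ C := by positivity
  have hCeq : 2 * ε * δ * C = 4 * Amax ^ 2 + 2 * ε * τ * K * (2 * φmax + δ) := by
    rw [hCdef]; field_simp; ring
  have hmeas : ∀ z : ℤ, Measurable (fun p : ℤ × ℤ => z + p.1 - p.2) := fun z =>
    measurable_of_countable _
  -- the real drift inequality
  have hreal : ∀ z : ℤ, (z : ℝ) ^ 2 + 4 * Amax ^ 2 +
      2 * z * (ε * (φc ((z : ℝ) / τ) - φs ((z : ℝ) / τ))) + 2 * ε * δ * |(z : ℝ)|
      ≤ (z : ℝ) ^ 2 + 2 * ε * δ * C := by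
    intro z
    rw [hCeq]
    set D := φc ((z : ℝ) / τ) - φs ((z : ℝ) / τ) with hD
    have hKτ : 0 < K * τ := by positivity
    have key : (z : ℝ) * D + δ * |(z : ℝ)| ≤ K * τ * (2 * φmax + δ) := by
      have hR : 0 ≤ K * τ * (2 * φmax + δ) := by positivity
      rcases lt_or_ge (K * τ) (z : ℝ) with h | h
      · have := hd1 ((z : ℝ) / τ) ((lt_div_iff₀ hτ).2 h)
        have hz : (0 : ℝ) < z := hKτ.trans h
        rw [abs_of_pos hz]
        nlinarith
      rcases lt_or_ge (z : ℝ) (-(K * τ)) with h' | h'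
      · have := hd2 ((z : ℝ) / τ) ((div_lt_iff₀ hτ).2 (by linarith))
        have hz : (z : ℝ) < 0 := by linarith
        rw [abs_of_neg hz]
        nlinarith
      · have hz : |(z : ℝ)| ≤ K * τ := abs_le.2 ⟨h', h⟩
        have hDb : |D| ≤ 2 * φmax := by
          have := abs_sub (φc ((z : ℝ) / τ)) (φs ((z : ℝ) / τ))
          linarith [hφc ((z : ℝ) / τ), hφs ((z : ℝ) / τ)]
        have h1 : (z : ℝ) * D ≤ K * τ * (2 * φmax) := by
          calc (z : ℝ) * D ≤ |(z : ℝ) * D| := le_abs_self _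
            _ = |(z : ℝ)| * |D| := abs_mul _ _
            _ ≤ _ := by gcongr
        nlinarith
    nlinarith [mul_le_mul_of_nonneg_left key hε.le]
  obtain ⟨π, hπ, hst, hL⟩ := exists_stationary_aux
    (fun z => (ν z).map (fun p => z + p.1 - p.2))
    (fun z => Measure.isProbabilityMeasure_map (hmeas z).aemeasurable)
    (fun z => ENNReal.ofReal ((z : ℝ) ^ 2)) (fun z => ENNReal.ofReal |(z : ℝ)|) (by simp)
    (ENNReal.ofReal (2 * ε * δ)) (ENNReal.ofReal C)
    (by rw [Ne, ENNReal.ofReal_eq_zero, not_le]; positivity) ENNReal.ofReal_ne_top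
    ENNReal.ofReal_ne_top (fun _ => ENNReal.ofReal_ne_top)
    (by
      intro N
      refine (Set.finite_Icc (-(N : ℤ)) N).subset fun z hz => ?_
      rw [Set.mem_ofPred_eq, ← ENNReal.ofReal_natCast, ENNReal.ofReal_lt_ofReal_iff'] at hz
      have h := abs_lt.1 hz.1
      exact ⟨by exact_mod_cast h.1.le, by exact_mod_cast h.2.le⟩)
    (by
      intro z
      have hint : Integrable (fun p : ℤ × ℤ => (p.1 : ℝ) - (p.2 : ℝ)) (ν z) := by
        refine Integrable.of_bound (measurable_of_countable _).aestronglyMeasurable (2 * Amax) ?_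
        filter_upwards [hb z] with p hp
        have := abs_sub (p.1 : ℝ) (p.2 : ℝ)
        rw [Real.norm_eq_abs]
        linarith [hp.1, hp.2]
      have hle : ∀ᵐ p ∂(ν z), (((z + p.1 - p.2 : ℤ) : ℝ)) ^ 2 ≤
          ((z : ℝ) ^ 2 + 4 * Amax ^ 2) + 2 * z * ((p.1 : ℝ) - p.2) := by
        filter_upwards [hb z] with p hp
        have h1 := abs_le.1 hp.1
        have h2 := abs_le.1 hp.2
        have : ((p.1 : ℝ) - p.2) ^ 2 ≤ (2 * Amax) ^ 2 := by
          apply sq_le_sq'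
          · linarith
          · linarith
        push_cast
        nlinarith
      have hint2 : Integrable (fun p : ℤ × ℤ =>
          ((z : ℝ) ^ 2 + 4 * Amax ^ 2) + 2 * z * ((p.1 : ℝ) - p.2)) (ν z) :=
        (integrable_const _).add (hint.const_mul _)
      have hval : ∫ p, (((z : ℝ) ^ 2 + 4 * Amax ^ 2) + 2 * z * ((p.1 : ℝ) - p.2)) ∂(ν z)
          = (z : ℝ) ^ 2 + 4 * Amax ^ 2 +
            2 * z * (ε * (φc ((z : ℝ) / τ) - φs ((z : ℝ) / τ))) := by
        rw [integral_add (integrable_const _) (hint.const_mul _), integral_const_mul, hmean]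
        simp
      have hnn : 0 ≤ᵐ[ν z] (fun p : ℤ × ℤ =>
          ((z : ℝ) ^ 2 + 4 * Amax ^ 2) + 2 * z * ((p.1 : ℝ) - p.2)) := by
        filter_upwards [hle] with p hp
        exact (sq_nonneg _).trans hp
      rw [lintegral_map (measurable_of_countable _) (hmeas z)]
      have hstep : ∫⁻ p, ENNReal.ofReal ((((z + p.1 - p.2 : ℤ) : ℝ)) ^ 2) ∂(ν z) ≤
          ENNReal.ofReal ((z : ℝ) ^ 2 + 4 * Amax ^ 2 +
            2 * z * (ε * (φc ((z : ℝ) / τ) - φs ((z : ℝ) / τ)))) := by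
        rw [← hval, ofReal_integral_eq_lintegral_ofReal hint2 hnn]
        refine lintegral_mono_ae ?_
        filter_upwards [hle] with p hp
        exact ENNReal.ofReal_le_ofReal hp
      have hvnn : 0 ≤ (z : ℝ) ^ 2 + 4 * Amax ^ 2 +
            2 * z * (ε * (φc ((z : ℝ) / τ) - φs ((z : ℝ) / τ))) := by
        rw [← hval]; exact integral_nonneg_of_ae hnn
      refine (add_le_add_left hstep _).trans ?_
      rw [← ENNReal.ofReal_mul (by positivity), ← ENNReal.ofReal_mul (by positivity),
        ← ENNReal.ofReal_add hvnn (by positivity), ← ENNReal.ofReal_add (by positivity) (by positivity)]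
      exact ENNReal.ofReal_le_ofReal (hreal z))
  refine ⟨π, hπ, hst, ?_⟩
  rw [integral_eq_lintegral_of_nonneg_ae (Filter.Eventually.of_forall fun z => abs_nonneg _)
    (measurable_of_countable _).aestronglyMeasurable]
  exact ENNReal.toReal_le_of_le_ofReal hC0 hL
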